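/- arXiv:2408.16488 — 2 statements merged into one kernel-verified Lean document; each statement's English description precedes it below -/
import Mathlib

section
/- Let f ∈ MvPolynomial (Fin 3) ℂ be a nonzero homogeneous polynomial of degree 3. Then the stabilizer {g ∈ SL₃(ℂ) : f∘g = f} is an infinite set if and only if f is not irreducible (i.e., f is a reducible cubic form). -/
open MvPolynomial

/-- The linear substitution `f ∘ g`, i.e. `x_i ↦ Σ_j g_{ij} x_j`, so that
`(f∘g)(v) = f(g·v)`. -/
noncomputable def substSL (g : Matrix.SpecialLinearGroup (Fin 3) ℂ)
    (f : MvPolynomial (Fin 3) ℂ) : MvPolynomial (Fin 3) ℂ :=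
  aeval (fun i : Fin 3 => ∑ j : Fin 3, C (g.1 i j) * X j) f

/-!
The stabilizer of a form `f` in `SLₙ` is infinite iff its Lie algebra contains a nonzero `A`, that
is, iff a nonzero traceless linear vector field annihilates `f`. If there is such an `A`, then
`exp (s • A)` stabilizes `f`. If there is none, the coordinate ring of the stabilizer is formally
unramified, hence finite-dimensional.

For a ternary cubic, a product `l * q` of a linear and a quadratic form is annihilated by the field
`∇l × ∇q`, or by a shear along `l = 0` when that field vanishes. Conversely, triangularize `A` with
the eigenvalues in a suitable order: unless `A` has rank one, comparing coefficients in `D_A f = 0`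
shows that the first coordinate divides `f`. If `A = u cᵀ`, then `f` is constant along `u`, so it is
a binary form, and those split into linear factors over an algebraically closed field.
-/

section LinearSubst

variable {σ R S : Type*} [Fintype σ] [CommRing R] [CommRing S]

/-- The substitution `f ↦ f ∘ g` of a square matrix `g`, as an algebra endomorphism. -/
noncomputable def linearSubst (g : Matrix σ σ R) : MvPolynomial σ R →ₐ[R] MvPolynomial σ R :=
  aeval fun i => ∑ j, C (g i j) * X j

@[simp]
lemma linearSubst_X (g : Matrix σ σ R) (i : σ) : linearSubst g (X i) = ∑ j, C (g i j) * X j :=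
  aeval_X _ i

lemma linearSubst_linearSubst (g h : Matrix σ σ R) (f : MvPolynomial σ R) :
    linearSubst g (linearSubst h f) = linearSubst (h * g) f := by
  suffices (linearSubst g).comp (linearSubst h) = linearSubst (h * g) from DFunLike.congr_fun this f
  ext1 i
  simp only [AlgHom.comp_apply, linearSubst_X, map_sum, map_mul, algHom_C, algebraMap_eq,
    Matrix.mul_apply, Finset.mul_sum, Finset.sum_mul, mul_assoc]
  exact Finset.sum_comm

@[simp]
lemma linearSubst_one [DecidableEq σ] (f : MvPolynomial σ R) : linearSubst 1 f = f := by
  suffices linearSubst (1 : Matrix σ σ R) = AlgHom.id R _ from DFunLike.congr_fun this f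
  ext1 i
  simp [Matrix.one_apply]

lemma map_linearSubst (φ : R →+* S) (g : Matrix σ σ R) (f : MvPolynomial σ R) :
    map φ (linearSubst g f) = linearSubst (g.map φ) (map φ f) := by
  induction f using MvPolynomial.induction_on with
  | C a => simp [algHom_C]
  | add p q hp hq => simp only [map_add, hp, hq]
  | mul_X p i hp => simp [hp]

lemma eval_linearSubst (g : Matrix σ σ R) (f : MvPolynomial σ R) (v : σ → R) :
    eval v (linearSubst g f) = eval (g.mulVec v) f := by
  induction f using MvPolynomial.induction_on with
  | C a => simp [algHom_C]
  | add p q hp hq => simp only [map_add, hp, hq]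
  | mul_X p i hp => simp [hp, Matrix.mulVec, dotProduct]

lemma linearSubst_isHomogeneous {f : MvPolynomial σ R} {d : ℕ} (hf : f.IsHomogeneous d)
    (g : Matrix σ σ R) : (linearSubst g f).IsHomogeneous d := by
  have := hf.aeval (fun i => ∑ j, C (g i j) * X j : σ → MvPolynomial σ R) (n := 1)
    fun i => IsHomogeneous.sum _ _ _ fun j _ => isHomogeneous_C_mul_X _ j
  rwa [one_mul] at this

lemma linearSubst_bijective [DecidableEq σ] {P : Matrix σ σ R} (hP : IsUnit P.det) :
    Function.Bijective (linearSubst P) :=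
  Function.bijective_iff_has_inverse.2 ⟨linearSubst P⁻¹,
    fun f => by rw [linearSubst_linearSubst, Matrix.mul_nonsing_inv _ hP, linearSubst_one],
    fun f => by rw [linearSubst_linearSubst, Matrix.nonsing_inv_mul _ hP, linearSubst_one]⟩

lemma irreducible_linearSubst_iff [DecidableEq σ] {P : Matrix σ σ R} (hP : IsUnit P.det)
    {f : MvPolynomial σ R} : Irreducible (linearSubst P f) ↔ Irreducible f :=
  MulEquiv.irreducible_iff (AlgEquiv.ofBijective _ (linearSubst_bijective hP))

end LinearSubst

section LinearVectorField

variable {σ R : Type*} [Fintype σ] [CommRing R]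

/-- The linear vector field `v ↦ A v` acting on polynomials by `f ↦ ∑ i, (A x)ᵢ ∂f/∂xᵢ`; it is the
derivative at `ε = 0` of `f ∘ (1 + ε A)`. -/
noncomputable def linearVectorField (A : Matrix σ σ R) :
    Derivation R (MvPolynomial σ R) (MvPolynomial σ R) :=
  mkDerivation R fun i => ∑ j, C (A i j) * X j

@[simp]
lemma linearVectorField_X (A : Matrix σ σ R) (i : σ) :
    linearVectorField A (X i) = ∑ j, C (A i j) * X j :=
  mkDerivation_X _ _ i

lemma linearVectorField_apply (A : Matrix σ σ R) (f : MvPolynomial σ R) :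
    linearVectorField A f = ∑ i, ∑ j, C (A i j) * (X j * pderiv i f) := by
  classical
  induction f using MvPolynomial.induction_on with
  | C a => simp
  | add p q hp hq => simp only [map_add, mul_add, Finset.sum_add_distrib, hp, hq]
  | mul_X p k hp =>
    have hX : ∑ i, ∑ j, C (A i j) * (X j * (p * pderiv i (X k))) = 
        p * linearVectorField A (X k) := by
      simp [pderiv_X, Pi.single_apply, Finset.mul_sum, mul_comm, mul_assoc]
    simp only [Derivation.leibniz, smul_eq_mul, hp, ← hX, mul_add, Finset.sum_add_distrib,
      Finset.mul_sum, mul_left_comm (X k)]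

lemma linearVectorField_apply_eq_dotProduct (A : Matrix σ σ R) (f : MvPolynomial σ R) :
    linearVectorField A f =
      (fun i => linearVectorField A (X i)) ⬝ᵥ fun i => pderiv i f := by
  simp only [linearVectorField_apply A f, linearVectorField_X, dotProduct, Finset.sum_mul,
    mul_assoc]

lemma linearVectorField_vecMulVec (u c : σ → R) (f : MvPolynomial σ R) :
    linearVectorField (Matrix.vecMulVec u c) f =
      (∑ j, C (c j) * X j) * ∑ i, u i • pderiv i f := by
  simp only [linearVectorField_apply, Matrix.vecMulVec_apply, C_mul, Finset.mul_sum,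
    Finset.sum_mul, smul_eq_C_mul]
  exact Finset.sum_congr rfl fun i _ => Finset.sum_congr rfl fun j _ => by ring

lemma coeff_linearVectorField (A : Matrix σ σ R) (f : MvPolynomial σ R) (m : σ →₀ ℕ) :
    coeff m (linearVectorField A f) = ∑ i, ∑ j, A i j * coeff m (X j * pderiv i f) := by
  simp only [linearVectorField_apply, coeff_sum, coeff_C_mul]

lemma linearVectorField_linearSubst {A U P : Matrix σ σ R} (h : A * P = P * U)
    (f : MvPolynomial σ R) :
    linearVectorField U (linearSubst P f) = linearSubst P (linearVectorField A f) := by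
  induction f using MvPolynomial.induction_on with
  | C a => simp [algHom_C]
  | add p q hp hq => simp only [map_add, hp, hq]
  | mul_X p i hp =>
    have hX : linearVectorField U (linearSubst P (X i)) =
        linearSubst P (linearVectorField A (X i)) := by
      have hi (k : σ) : ∑ j, A i j * P j k = ∑ j, P i j * U j k := by
        simpa only [Matrix.mul_apply] using Matrix.ext_iff.mpr h i k
      simp only [linearSubst_X, linearVectorField_X, map_sum, ← smul_eq_C_mul, map_smul,
        Derivation.map_smul, Finset.smul_sum, smul_smul]
      rw [Finset.sum_comm]
      conv_rhs => rw [Finset.sum_comm]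
      exact Finset.sum_congr rfl fun k _ => by rw [← Finset.sum_smul, ← hi, Finset.sum_smul]
    simp only [map_mul, Derivation.leibniz, map_add, smul_eq_mul, hp, hX]

/-- An infinitesimal `SL`-symmetry of `f`: a nonzero element of the Lie algebra of its stabilizer in
the special linear group. -/
def HasInfinitesimalSymmetry (f : MvPolynomial σ R) : Prop :=
  ∃ A : Matrix σ σ R, A ≠ 0 ∧ A.trace = 0 ∧ linearVectorField A f = 0

end LinearVectorField

section Rigidity

variable {n K B : Type*} [Fintype n] [CommRing B]

lemma linearSubst_one_add_of_mul_eq_zero [DecidableEq n] {A : Matrix n n B}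
    (hA : ∀ i j k l, A i j * A k l = 0) (f : MvPolynomial n B) :
    linearSubst (1 + A) f = f + linearVectorField A f := by
  induction f using MvPolynomial.induction_on with
  | C a => simp [algHom_C]
  | add p q hp hq => simp only [map_add, hp, hq]; ring
  | mul_X p i hp =>
    have hX : linearSubst (1 + A) (X i) = X i + linearVectorField A (X i) := by
      simp [Matrix.one_apply, add_mul, Finset.sum_add_distrib]
    have hsq : linearVectorField A p * linearVectorField A (X i) = 0 := by
      rw [linearVectorField_apply A p, linearVectorField_X, Finset.sum_mul]
      refine Finset.sum_eq_zero fun k _ => ?_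
      rw [Finset.sum_mul_sum]
      refine Finset.sum_eq_zero fun l _ => Finset.sum_eq_zero fun j _ => ?_
      rw [mul_mul_mul_comm, ← C_mul, hA, C_0, zero_mul]
    rw [map_mul, hp, hX, Derivation.leibniz, smul_eq_mul, smul_eq_mul]
    linear_combination hsq

lemma prod_one_add_of_mul_eq_zero {ι : Type*} (a : ι → B)
    (ha : ∀ i j, a i * a j = 0) (s : Finset ι) : ∏ i ∈ s, (1 + a i) = 1 + ∑ i ∈ s, a i := by
  classical
  induction s using Finset.induction_on with
  | empty => simp
  | insert i s hi ih =>
    have hsum : a i * ∑ j ∈ s, a j = 0 := by simp [Finset.mul_sum, ha]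
    rw [Finset.prod_insert hi, Finset.sum_insert hi, ih]
    linear_combination hsum

lemma det_one_add_of_mul_eq_zero [DecidableEq n] {A : Matrix n n B}
    (hA : ∀ i j k l, A i j * A k l = 0) : (1 + A).det = 1 + A.trace := by
  rw [Matrix.det_apply, Finset.sum_eq_single 1]
  · simpa [Matrix.trace] using prod_one_add_of_mul_eq_zero (fun i => A i i)
      (fun i j => hA i i j j) Finset.univ
  · intro τ _ hτ
    obtain ⟨i, hi⟩ : ∃ i, τ i ≠ i := not_forall.1 fun h => hτ (Equiv.ext h)
    have hτi : τ (τ i) ≠ τ i := fun h => hi (τ.injective h)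
    rw [← Finset.mul_prod_erase _ _ (Finset.mem_univ i),
      ← Finset.mul_prod_erase _ _ (Finset.mem_erase.2 ⟨hi, Finset.mem_univ (τ i)⟩), ← mul_assoc]
    simp [Matrix.one_apply_ne, hi, hτi, hA]
  · simp

variable [Field K] [Algebra K B]

lemma eq_zero_of_linearVectorField_map_eq_zero {f : MvPolynomial n K}
    (hf : ¬ HasInfinitesimalSymmetry f) {A : Matrix n n B} (htr : A.trace = 0)
    (hA : linearVectorField A (map (algebraMap K B) f) = 0) : A = 0 := by
  ext i j
  rw [Matrix.zero_apply, ← Module.forall_dual_apply_eq_zero_iff K]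
  intro φ
  by_contra hij
  refine hf ⟨A.map φ, fun h => hij (congr_fun₂ h i j), ?_, ?_⟩
  · simpa [Matrix.trace] using congrArg φ htr
  · ext m
    have hm := congrArg (fun p => φ (coeff m p)) hA
    have hcoeff (k l : n) : coeff m (X l * pderiv k (map (algebraMap K B) f)) =
        algebraMap K B (coeff m (X l * pderiv k f)) := by
      rw [pderiv_map, ← coeff_map, map_mul, map_X]
    simpa only [coeff_linearVectorField, hcoeff, mul_comm (A _ _), ← Algebra.smul_def, map_sum,
      map_smul, smul_eq_mul, Matrix.map_apply, mul_comm (φ _), coeff_zero, map_zero] using hm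

/-- Two stabilizing matrices that are congruent modulo a square-zero ideal differ by a factor
`1 + A` with `A` an infinitesimal symmetry. -/
lemma eq_of_linearSubst_map_eq_of_sub_mem [DecidableEq n] {f : MvPolynomial n K}
    (hf : ¬ HasInfinitesimalSymmetry f) {I : Ideal B} (hI : I ^ 2 = ⊥) {g h : Matrix n n B}
    (hg : g.det = 1) (hh : h.det = 1)
    (hgf : linearSubst g (map (algebraMap K B) f) = map (algebraMap K B) f)
    (hhf : linearSubst h (map (algebraMap K B) f) = map (algebraMap K B) f)
    (hgh : ∀ i j, (h - g) i j ∈ I) : g = h := by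
  set A := g.adjugate * (h - g) with hAdef
  have hfactor : g * (1 + A) = h := by
    rw [hAdef, mul_add, mul_one, ← mul_assoc, Matrix.mul_adjugate, hg, one_smul, one_mul,
      add_sub_cancel]
  have hAI (i j : n) : A i j ∈ I :=
    Ideal.sum_mem _ fun k _ => Ideal.mul_mem_left _ _ (hgh k j)
  have hAA (i j k l : n) : A i j * A k l = 0 := by
    rw [← Ideal.mem_bot, ← hI, pow_two]
    exact Ideal.mul_mem_mul (hAI i j) (hAI k l)
  have htr : A.trace = 0 := by
    have hdet := congrArg Matrix.det hfactor
    rwa [Matrix.det_mul, hg, hh, one_mul, det_one_add_of_mul_eq_zero hAA, add_eq_left] at hdet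
  have hLie : linearVectorField A (map (algebraMap K B) f) = 0 := by
    rwa [← hfactor, ← linearSubst_linearSubst, hgf, linearSubst_one_add_of_mul_eq_zero hAA,
      add_eq_left] at hhf
  rw [← hfactor, eq_zero_of_linearVectorField_map_eq_zero hf htr hLie, add_zero, mul_one]

end Rigidity

section Finiteness

variable {n K : Type*} [Fintype n] [DecidableEq n] [Field K]

/-- The ideal, in the coordinate ring of the `n × n` matrices, of the stabilizer of `f` in the
special linear group. -/
noncomputable def stabilizerIdeal (f : MvPolynomial n K) : Ideal (MvPolynomial (n × n) K) :=
  Ideal.span (insert ((Matrix.mvPolynomialX n n K).det - 1)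
    (Set.range fun m => coeff m (linearSubst (Matrix.mvPolynomialX n n K) (map C f) - map C f)))

lemma stabilizerIdeal_le_ker_iff {B : Type*} [CommRing B] [Algebra K B] {f : MvPolynomial n K}
    {φ : MvPolynomial (n × n) K →ₐ[K] B} {M : Matrix n n B}
    (hM : (Matrix.mvPolynomialX n n K).map φ = M) :
    stabilizerIdeal f ≤ RingHom.ker φ ↔
      M.det = 1 ∧ linearSubst M (map (algebraMap K B) f) = map (algebraMap K B) f := by
  have hdet : φ (Matrix.mvPolynomialX n n K).det = M.det := by
    rw [AlgHom.map_det, AlgHom.mapMatrix_apply, hM]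
  have hmap : map (φ : MvPolynomial (n × n) K →+* B) (map C f) = map (algebraMap K B) f := by
    rw [map_map, ← algebraMap_eq, AlgHom.comp_algebraMap]
  have hcoeff (m : n →₀ ℕ) :
      φ (coeff m (linearSubst (Matrix.mvPolynomialX n n K) (map C f) - map C f)) =
        coeff m (linearSubst M (map (algebraMap K B) f) - map (algebraMap K B) f) := by
    have hφM : (Matrix.mvPolynomialX n n K).map (φ : MvPolynomial (n × n) K →+* B) = M := hM
    rw [← hmap, ← hφM, ← map_linearSubst, ← map_sub, coeff_map]
    rfl
  rw [stabilizerIdeal, Ideal.span_le, Set.insert_subset_iff, Set.range_subset_iff]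
  simp only [SetLike.mem_coe, RingHom.mem_ker, map_sub, map_one, hdet, sub_eq_zero]
  simp only [hcoeff]
  rw [← sub_eq_zero (a := linearSubst M _), MvPolynomial.ext_iff]
  rfl

lemma formallyUnramified_quotient_stabilizerIdeal {f : MvPolynomial n K}
    (hf : ¬ HasInfinitesimalSymmetry f) :
    Algebra.FormallyUnramified K (MvPolynomial (n × n) K ⧸ stabilizerIdeal f) := by
  rw [Algebra.FormallyUnramified.iff_comp_injective]
  intro B _ _ I hI φ ψ hφψ
  let M (θ : (MvPolynomial (n × n) K ⧸ stabilizerIdeal f) →ₐ[K] B) : Matrix n n B :=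
    (Matrix.mvPolynomialX n n K).map (θ.comp (Ideal.Quotient.mkₐ K (stabilizerIdeal f)))
  have hM (θ : (MvPolynomial (n × n) K ⧸ stabilizerIdeal f) →ₐ[K] B) :=
    (stabilizerIdeal_le_ker_iff (f := f) (M := M θ) rfl).1 fun x hx => by
      simp [RingHom.mem_ker, Ideal.Quotient.eq_zero_iff_mem.2 hx]
  have hMφψ : M φ = M ψ := by
    refine eq_of_linearSubst_map_eq_of_sub_mem hf hI (hM φ).1 (hM ψ).1 (hM φ).2 (hM ψ).2
      fun i j => ?_
    rw [Matrix.sub_apply, ← Ideal.Quotient.eq]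
    exact (DFunLike.congr_fun hφψ (Ideal.Quotient.mk _ (X (i, j)))).symm
  refine Ideal.Quotient.algHom_ext _ (MvPolynomial.algHom_ext fun ⟨i, j⟩ => ?_)
  exact congr_fun₂ hMφψ i j

theorem finite_stabilizer_of_not_hasInfinitesimalSymmetry {f : MvPolynomial n K}
    (hf : ¬ HasInfinitesimalSymmetry f) :
    {g : Matrix.SpecialLinearGroup n K | linearSubst g.1 f = f}.Finite := by
  have := formallyUnramified_quotient_stabilizerIdeal hf
  have : Module.Finite K (MvPolynomial (n × n) K ⧸ stabilizerIdeal f) :=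
    Algebra.FormallyUnramified.finite_of_free _ _
  let evalAt (g : Matrix.SpecialLinearGroup n K) : MvPolynomial (n × n) K →ₐ[K] K :=
    aeval fun p : n × n => g.1 p.1 p.2
  have hker (g : {g : Matrix.SpecialLinearGroup n K | linearSubst g.1 f = f}) :
      stabilizerIdeal f ≤ RingHom.ker (evalAt g) :=
    (stabilizerIdeal_le_ker_iff (Matrix.mvPolynomialX_mapMatrix_aeval K g.1.1)).2
      ⟨g.1.2, by simpa only [Algebra.algebraMap_self, map_id] using g.2.out⟩
  refine Set.finite_coe_iff.1 <| Finite.of_injective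
    (fun g => Ideal.Quotient.liftₐ (stabilizerIdeal f) (evalAt g) (hker g)) fun g h hgh => ?_
  ext i j
  have hX : evalAt g (X (i, j)) = evalAt h (X (i, j)) :=
    DFunLike.congr_fun hgh (Ideal.Quotient.mk _ (X (i, j)))
  simpa [evalAt] using hX

end Finiteness

section OneParameterSubgroup

variable {n 𝕜 : Type*} [Fintype n] [DecidableEq n] [RCLike 𝕜]

open scoped Matrix.Norms.Operator

lemma hasDerivAt_exp_smul_mulVec (A : Matrix n n 𝕜) (v : n → 𝕜) (i : n) (s : 𝕜) :
    HasDerivAt (fun s : 𝕜 => (NormedSpace.exp (s • A)).mulVec v i)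
      (A.mulVec ((NormedSpace.exp (s • A)).mulVec v) i) s := by
  let L : Matrix n n 𝕜 →ₗ[𝕜] 𝕜 := (LinearMap.proj i).comp ((Matrix.mulVecBilin 𝕜 𝕜).flip v)
  have hL := L.toContinuousLinearMap.hasFDerivAt.comp_hasDerivAt s
    (hasDerivAt_exp_smul_const' A s)
  rw [Matrix.mulVec_mulVec]
  exact hL

omit [DecidableEq n] in
lemma hasDerivAt_eval_integralCurve {A : Matrix n n 𝕜} {γ : 𝕜 → n → 𝕜} {s : 𝕜}
    (hγ : ∀ i, HasDerivAt (fun s => γ s i) (A.mulVec (γ s) i) s) (f : MvPolynomial n 𝕜) :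
    HasDerivAt (fun s => eval (γ s) f) (eval (γ s) (linearVectorField A f)) s := by
  induction f using MvPolynomial.induction_on with
  | C a => simpa using hasDerivAt_const s a
  | add p q hp hq => simpa using hp.fun_add hq
  | mul_X p i hp =>
    convert! hp.fun_mul (hγ i) using 1
    · simp
    · simp [Matrix.mulVec, dotProduct]; ring

lemma linearSubst_exp_smul_eq_self {A : Matrix n n 𝕜} {f : MvPolynomial n 𝕜}
    (hA : linearVectorField A f = 0) (s : 𝕜) :
    linearSubst (NormedSpace.exp (s • A)) f = f := by
  refine MvPolynomial.funext fun v => ?_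
  let φ (s : 𝕜) : 𝕜 := eval ((NormedSpace.exp (s • A)).mulVec v) f
  have hφ (s : 𝕜) : HasDerivAt φ 0 s := by
    simpa [hA] using hasDerivAt_eval_integralCurve
      (fun i => hasDerivAt_exp_smul_mulVec A v i s) f
  calc eval v (linearSubst (NormedSpace.exp (s • A)) f) = φ s := eval_linearSubst _ _ _
    _ = φ 0 := is_const_of_deriv_eq_zero (fun s => (hφ s).differentiableAt)
      (fun s => (hφ s).deriv) _ _
    _ = eval v f := by simp [φ]

lemma differentiable_det : Differentiable 𝕜 (Matrix.det : Matrix n n 𝕜 → 𝕜) := by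
  have (i j : n) : Differentiable 𝕜 fun M : Matrix n n 𝕜 => M i j :=
    (Matrix.entryLinearMap 𝕜 𝕜 i j).toContinuousLinearMap.differentiable
  simp only [funext Matrix.det_apply]
  fun_prop

lemma hasDerivAt_det_one_add_smul (A : Matrix n n 𝕜) :
    HasDerivAt (fun s : 𝕜 => (1 + s • A).det) A.trace 0 := by
  have hpoly := (1 + (Polynomial.X : Polynomial 𝕜) • A.map Polynomial.C).det.hasDerivAt (0 : 𝕜)
  rw [Matrix.derivative_det_one_add_X_smul] at hpoly
  simpa [eval_det, ← Matrix.smul_eq_mul_diagonal] using hpoly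

lemma hasDerivAt_det_of_eq_one {γ : 𝕜 → Matrix n n 𝕜} {A : Matrix n n 𝕜} (hγ : HasDerivAt γ A 0)
    (hγ_zero : γ 0 = 1) : HasDerivAt (fun s => (γ s).det) A.trace 0 := by
  obtain ⟨D, hD⟩ := differentiable_det (1 : Matrix n n 𝕜)
  have hline : HasDerivAt (fun s : 𝕜 => 1 + s • A) A 0 := by
    have h := ((hasDerivAt_id (0 : 𝕜)).smul_const A).const_add 1
    rwa [one_smul] at h
  have htrace : D A = A.trace :=
    (hD.comp_hasDerivAt_of_eq 0 hline (by simp)).unique (hasDerivAt_det_one_add_smul A)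
  exact htrace ▸ hD.comp_hasDerivAt_of_eq 0 hγ hγ_zero.symm

lemma det_exp_smul_eq_one {A : Matrix n n 𝕜} (hA : A.trace = 0) (s : 𝕜) :
    (NormedSpace.exp (s • A)).det = 1 := by
  let φ (s : 𝕜) : 𝕜 := (NormedSpace.exp (s • A)).det
  have hφ_add (s t : 𝕜) : φ (s + t) = φ s * φ t := by
    simp only [φ]
    rw [add_smul, Matrix.exp_add_of_commute _ _ (((Commute.refl A).smul_left s).smul_right t),
      Matrix.det_mul]
  have hφ_zero : HasDerivAt φ 0 0 := by
    have hexp := hasDerivAt_exp_smul_const A (0 : 𝕜)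
    rw [zero_smul, NormedSpace.exp_zero, one_mul] at hexp
    exact hA ▸ hasDerivAt_det_of_eq_one hexp (by simp)
  have hφ (s : 𝕜) : HasDerivAt φ 0 s := by
    have hshift : HasDerivAt (fun t => φ (t - s)) 0 s :=
      HasDerivAt.comp_sub_const s s (by rwa [sub_self])
    have h := hshift.const_mul (φ s)
    simpa only [← hφ_add, add_sub_cancel, mul_zero] using h
  calc φ s
    _ = φ 0 := is_const_of_deriv_eq_zero (fun s => (hφ s).differentiableAt)
      (fun s => (hφ s).deriv) _ _
    _ = 1 := by simp [φ]

lemma infinite_range_exp_smul {A : Matrix n n 𝕜} (hA : A ≠ 0) :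
    (Set.range fun s : 𝕜 => NormedSpace.exp (s • A)).Infinite := by
  have hcont : Continuous fun s : 𝕜 => NormedSpace.exp (s • A) :=
    (differentiable_exp_smul_const 𝕜 A).continuous
  refine (isPreconnected_range hcont).infinite_of_nontrivial ?_
  by_contra h
  have hconst (s : 𝕜) : NormedSpace.exp (s • A) = 1 :=
    Set.not_nontrivial_iff.1 h ⟨s, rfl⟩ ⟨0, by simp⟩
  have hderiv := hasDerivAt_exp_smul_const A (0 : 𝕜)
  rw [zero_smul, NormedSpace.exp_zero, one_mul] at hderiv
  exact hA (hderiv.unique ((hasDerivAt_const (0 : 𝕜) 1).congr_of_eventuallyEq (.of_forall hconst)))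

theorem infinite_stabilizer_of_hasInfinitesimalSymmetry {f : MvPolynomial n 𝕜}
    (hf : HasInfinitesimalSymmetry f) :
    {g : Matrix.SpecialLinearGroup n 𝕜 | linearSubst g.1 f = f}.Infinite := by
  obtain ⟨A, hA, htr, hAf⟩ := hf
  refine Set.Infinite.of_image (fun g => g.1) ((infinite_range_exp_smul hA).mono ?_)
  rintro _ ⟨s, rfl⟩
  exact ⟨⟨_, det_exp_smul_eq_one htr s⟩, linearSubst_exp_smul_eq_self hAf s, rfl⟩

end OneParameterSubgroup

section HomogeneousFactors

variable {σ R : Type*}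

lemma homogeneousComponent_add_mul [CommSemiring R] {p q : MvPolynomial σ R} {a b : ℕ}
    (hp : p.totalDegree ≤ a) (hq : q.totalDegree ≤ b) :
    homogeneousComponent (a + b) (p * q) =
      homogeneousComponent a p * homogeneousComponent b q := by
  classical
  have hcoeff {r : MvPolynomial σ R} {d : ℕ} (hr : r.totalDegree ≤ d) {m : σ →₀ ℕ}
      (hm : d < m.degree) : coeff m r = 0 :=
    coeff_eq_zero_of_totalDegree_lt (hr.trans_lt hm)
  ext m
  rw [coeff_homogeneousComponent]
  split_ifs with hm
  · rw [coeff_mul, coeff_mul]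
    refine Finset.sum_congr rfl fun ⟨m₁, m₂⟩ h₁₂ => ?_
    have hsum : m₁.degree + m₂.degree = a + b := by
      rw [← map_add, Finset.HasAntidiagonal.mem_antidiagonal.1 h₁₂, hm]
    simp only [coeff_homogeneousComponent]
    rcases lt_trichotomy m₁.degree a with hlt | heq | hgt
    · rw [hcoeff hq (by omega), if_neg (by omega), mul_zero, zero_mul]
    · rw [if_pos heq, if_pos (by omega)]
    · rw [hcoeff hp hgt, if_neg (by omega), zero_mul, zero_mul]
  · exact (((homogeneousComponent_isHomogeneous a p).mul
      (homogeneousComponent_isHomogeneous b q)).coeff_eq_zero hm).symm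

lemma exists_linear_mul_quadratic_of_not_irreducible {K : Type*} [Field K] {f : MvPolynomial σ K}
    (hf0 : f ≠ 0) (hf : f.IsHomogeneous 3) (hred : ¬ Irreducible f) :
    ∃ l q : MvPolynomial σ K, l.IsHomogeneous 1 ∧ q.IsHomogeneous 2 ∧ f = l * q := by
  have hnonunit : ¬ IsUnit f := by
    rw [isUnit_iff_totalDegree_of_isReduced, hf.totalDegree hf0]
    omega
  obtain ⟨p, q, rfl, hp, hq⟩ : ∃ p q, f = p * q ∧ ¬ IsUnit p ∧ ¬ IsUnit q := by
    simpa [irreducible_iff, hnonunit] using hred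
  have hp0 : p ≠ 0 := left_ne_zero_of_mul hf0
  have hq0 : q ≠ 0 := right_ne_zero_of_mul hf0
  have hdeg : p.totalDegree + q.totalDegree = 3 := by
    rw [← totalDegree_mul_of_isDomain hp0 hq0, hf.totalDegree hf0]
  have hpos {r : MvPolynomial σ K} (hr0 : r ≠ 0) (hr : ¬ IsUnit r) : 0 < r.totalDegree := by
    refine Nat.pos_of_ne_zero fun h => hr ?_
    rw [totalDegree_eq_zero_iff_eq_C] at h
    rw [h] at hr0 ⊢
    exact (isUnit_iff_ne_zero.2 fun hc => hr0 (by rw [hc, C_0])).map C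
  have htop : p * q =
      homogeneousComponent p.totalDegree p * homogeneousComponent q.totalDegree q := by
    rw [← homogeneousComponent_add_mul le_rfl le_rfl, hdeg, homogeneousComponent_eq_self hf]
  have hp_hom := homogeneousComponent_isHomogeneous p.totalDegree p
  have hq_hom := homogeneousComponent_isHomogeneous q.totalDegree q
  have hp_pos := hpos hp0 hp
  have hq_pos := hpos hq0 hq
  obtain ⟨h1, h2⟩ | ⟨h2, h1⟩ : p.totalDegree = 1 ∧ q.totalDegree = 2 ∨
      p.totalDegree = 2 ∧ q.totalDegree = 1 := by omega
  · exact ⟨_, _, h1 ▸ hp_hom, h2 ▸ hq_hom, htop⟩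
  · exact ⟨_, _, h1 ▸ hq_hom, h2 ▸ hp_hom, htop.trans (mul_comm _ _)⟩

lemma eq_sum_of_isHomogeneous_one [Fintype σ] [CommSemiring R] {p : MvPolynomial σ R}
    (hp : p.IsHomogeneous 1) : p = ∑ i, C (coeff (Finsupp.single i 1) p) * X i := by
  classical
  rw [← mem_homogeneousSubmodule, homogeneousSubmodule_one_eq_span_X,
    Submodule.mem_span_range_iff_exists_fun] at hp
  obtain ⟨c, rfl⟩ := hp
  simp [smul_eq_C_mul, coeff_sum, coeff_C_mul, coeff_X, Finsupp.single_left_inj]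

lemma not_irreducible_mul_of_isHomogeneous {K : Type*} [Field K] {p q : MvPolynomial σ K}
    {a b : ℕ} (hp : p.IsHomogeneous a) (hq : q.IsHomogeneous b) (ha : a ≠ 0) (hb : b ≠ 0) :
    ¬ Irreducible (p * q) := by
  have hnonunit {r : MvPolynomial σ K} {d : ℕ} (hr : r.IsHomogeneous d) (hd : d ≠ 0) :
      ¬ IsUnit r := fun h =>
    hd ((hr.totalDegree h.ne_zero).symm.trans (isUnit_iff_totalDegree_of_isReduced.1 h).2)
  exact fun h => (h.isUnit_or_isUnit rfl).elim (hnonunit hp ha) (hnonunit hq hb)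

end HomogeneousFactors

section ReducibleCubic

open scoped Matrix

/-- The symmetric matrix of second derivatives of a quadratic form `q`. -/
noncomputable def hessian {σ R : Type*} [CommSemiring R] (q : MvPolynomial σ R) : Matrix σ σ R :=
  Matrix.of fun i j => coeff (Finsupp.single j 1) (pderiv i q)

lemma hessian_isSymm {σ R : Type*} [CommSemiring R] (q : MvPolynomial σ R) :
    (hessian q).IsSymm := by
  classical
  ext i j
  simp only [hessian, Matrix.transpose_apply, Matrix.of_apply, coeff_pderiv, add_comm,
    Finsupp.single_apply, eq_comm]

lemma pderiv_eq_sum_hessian {σ R : Type*} [Fintype σ] [CommSemiring R] {q : MvPolynomial σ R}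
    (hq : q.IsHomogeneous 2) (i : σ) : pderiv i q = ∑ j, C (hessian q i j) * X j :=
  eq_sum_of_isHomogeneous_one hq.pderiv

variable {R : Type*} [CommRing R]

/-- The vector field `v ↦ ∇l × ∇q(v)` of the linear form with coefficients `c` and the quadratic
form `q`. It is tangent to the level sets of both forms. -/
noncomputable def jacobianMatrix (c : Fin 3 → R) (q : MvPolynomial (Fin 3) R) :
    Matrix (Fin 3) (Fin 3) R :=
  Matrix.of fun i j => (c ⨯₃ fun k => hessian q k j) i

lemma linearVectorField_jacobianMatrix_X (c : Fin 3 → R) {q : MvPolynomial (Fin 3) R}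
    (hq : q.IsHomogeneous 2) (i : Fin 3) :
    linearVectorField (jacobianMatrix c q) (X i) =
      ((fun k => C (c k)) ⨯₃ fun k => pderiv k q) i := by
  simp only [linearVectorField_X, pderiv_eq_sum_hessian hq, jacobianMatrix, Matrix.of_apply]
  fin_cases i <;> simp [cross_apply, Finset.sum_sub_distrib, Finset.mul_sum, sub_mul, mul_assoc]

lemma jacobianMatrix_trace (c : Fin 3 → R) (q : MvPolynomial (Fin 3) R) :
    (jacobianMatrix c q).trace = 0 := by
  have hsymm := (hessian_isSymm q).apply
  simp only [jacobianMatrix, Matrix.trace_fin_three, Matrix.of_apply, cross_apply,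
    Matrix.cons_val, hsymm 0 1, hsymm 0 2, hsymm 1 2]
  ring

lemma linearVectorField_jacobianMatrix_left (c : Fin 3 → R) {q : MvPolynomial (Fin 3) R}
    (hq : q.IsHomogeneous 2) :
    linearVectorField (jacobianMatrix c q) (∑ i, C (c i) * X i) = 0 := by
  have hgrad : (fun i => pderiv i (∑ k, C (c k) * X k)) =
      fun k => (C (c k) : MvPolynomial (Fin 3) R) := by
    ext1 i
    simp [pderiv_X, Pi.single_apply]
  rw [linearVectorField_apply_eq_dotProduct, hgrad,
    funext (linearVectorField_jacobianMatrix_X c hq), dotProduct_comm]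
  exact dot_self_cross _ _

lemma linearVectorField_jacobianMatrix_right (c : Fin 3 → R) {q : MvPolynomial (Fin 3) R}
    (hq : q.IsHomogeneous 2) : linearVectorField (jacobianMatrix c q) q = 0 := by
  rw [linearVectorField_apply_eq_dotProduct, funext (linearVectorField_jacobianMatrix_X c hq),
    dotProduct_comm]
  exact dot_cross_self _ _

variable {K : Type*} [Field K]

lemma hasInfinitesimalSymmetry_of_gradient_parallel {c : Fin 3 → K} (hc : c ≠ 0)
    {q : MvPolynomial (Fin 3) K}
    (hpar : ∀ i j, C (c i) * pderiv j q = C (c j) * pderiv i q) :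
    HasInfinitesimalSymmetry ((∑ i, C (c i) * X i) * q) := by
  obtain ⟨u, hu, huc⟩ := exists_ne_zero_dotProduct_eq_zero c
  obtain ⟨k, hk⟩ := Function.ne_iff.1 hc
  have hl : ∑ i, u i • pderiv i (∑ j, C (c j) * X j : MvPolynomial (Fin 3) K) = 0 := by
    have : ∀ i, pderiv i (∑ j, C (c j) * X j : MvPolynomial (Fin 3) K) = C (c i) := by
      simp [pderiv_X, Pi.single_apply]
    simp only [this, smul_eq_C_mul, ← C_mul, ← map_sum]
    rw [show ∑ i, u i * c i = 0 from huc, C_0]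
  have hq : ∑ i, u i • pderiv i q = 0 := by
    have hk' : (C (c k) : MvPolynomial (Fin 3) K) ≠ 0 := C_ne_zero.2 hk
    refine (mul_eq_zero.1 ?_).resolve_left hk'
    calc C (c k) * ∑ i, u i • pderiv i q = C (∑ i, u i * c i) * pderiv k q := by
          simp only [Finset.mul_sum, map_sum, C_mul, Finset.sum_mul, smul_eq_C_mul]
          exact Finset.sum_congr rfl fun i _ => by rw [mul_left_comm, hpar k i, mul_assoc]
      _ = 0 := by rw [show ∑ i, u i * c i = 0 from huc, C_0, zero_mul]
  -- the shear along `u`, which preserves each plane `c = const`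
  refine ⟨Matrix.vecMulVec u c, Matrix.vecMulVec_ne_zero hu hc, ?_, ?_⟩
  · rw [Matrix.trace_vecMulVec, huc]
  · rw [Derivation.leibniz, linearVectorField_vecMulVec, linearVectorField_vecMulVec, hl, hq]
    simp

theorem hasInfinitesimalSymmetry_of_not_irreducible {f : MvPolynomial (Fin 3) K} (hf0 : f ≠ 0)
    (hf : f.IsHomogeneous 3) (hred : ¬ Irreducible f) : HasInfinitesimalSymmetry f := by
  obtain ⟨l, q, hl, hq, rfl⟩ := exists_linear_mul_quadratic_of_not_irreducible hf0 hf hred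
  obtain ⟨c, rfl⟩ : ∃ c : Fin 3 → K, l = ∑ i, C (c i) * X i :=
    ⟨_, eq_sum_of_isHomogeneous_one hl⟩
  by_cases hA : jacobianMatrix c q = 0
  · have hcross : ((fun k => C (c k)) ⨯₃ fun k => pderiv k q) = 0 := by
      ext1 i
      rw [← linearVectorField_jacobianMatrix_X c hq, hA]
      simp
    refine hasInfinitesimalSymmetry_of_gradient_parallel ?_ fun i j => ?_
    · rintro rfl
      simp at hf0
    · have h0 := congrFun hcross 0
      have h1 := congrFun hcross 1
      have h2 := congrFun hcross 2
      simp only [cross_apply, Matrix.cons_val, Pi.zero_apply] at h0 h1 h2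
      fin_cases i <;> fin_cases j <;> grind
  · refine ⟨_, hA, jacobianMatrix_trace c q, ?_⟩
    rw [Derivation.leibniz, linearVectorField_jacobianMatrix_left c hq,
      linearVectorField_jacobianMatrix_right c hq, smul_zero, smul_zero, add_zero]

end ReducibleCubic

section Triangularization

open scoped Matrix

variable {K : Type*} [Field K]

lemma exists_isUnit_det_row_eq {n : Type*} [Fintype n] [DecidableEq n] {v : n → K} (hv : v ≠ 0)
    (i : n) : ∃ Q : Matrix n n K, IsUnit Q.det ∧ Q i = v := by
  obtain ⟨k, hk⟩ := Function.ne_iff.1 hv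
  refine ⟨((1 : Matrix n n K).updateRow k v).submatrix (Equiv.swap i k) id, ?_, ?_⟩
  · rw [Matrix.det_permute, ← Matrix.cramer_transpose_apply, Matrix.transpose_one,
      Matrix.cramer_one]
    exact ((Equiv.Perm.sign _).isUnit.map (Int.castRingHom K)).mul (isUnit_iff_ne_zero.2 hk)
  · ext j
    simp

lemma exists_left_eigenvector {n : Type*} [Fintype n] [DecidableEq n] {A : Matrix n n K} {μ : K}
    (hμ : A.charpoly.IsRoot μ) : ∃ v : n → K, v ≠ 0 ∧ v ᵥ* A = μ • v := by
  rw [Polynomial.IsRoot, Matrix.eval_charpoly, ← Matrix.exists_vecMul_eq_zero_iff] at hμ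
  obtain ⟨v, hv, h⟩ := hμ
  refine ⟨v, hv, ?_⟩
  rw [Matrix.vecMul_sub, sub_eq_zero] at h
  rw [← h, Matrix.scalar_apply, ← Matrix.smul_one_eq_diagonal, Matrix.vecMul_smul,
    Matrix.vecMul_one]

section ConsBlock

variable {R : Type*} [CommRing R] {n : ℕ}

/-- The block matrix with first row `(a, 0)`, first column `(a, b)` and lower right block `M`. -/
def consBlock (a : R) (b : Fin n → R) (M : Matrix (Fin n) (Fin n) R) :
    Matrix (Fin (n + 1)) (Fin (n + 1)) R :=
  Matrix.of (Fin.cons (Fin.cons a 0) fun i => Fin.cons (b i) (M i))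

lemma exists_eq_consBlock_of_row_zero_eq_single {B : Matrix (Fin (n + 1)) (Fin (n + 1)) R} {a : R}
    (hB : B 0 = Pi.single 0 a) : ∃ b M, B = consBlock a b M := by
  refine ⟨fun i => B i.succ 0, B.submatrix Fin.succ Fin.succ, ?_⟩
  ext i j
  cases i using Fin.cases <;> cases j using Fin.cases <;> simp [consBlock, hB]

lemma consBlock_mul_consBlock (a a' : R) (b b' : Fin n → R) (M M' : Matrix (Fin n) (Fin n) R) :
    consBlock a b M * consBlock a' b' M' = consBlock (a * a') (a' • b + M *ᵥ b') (M * M') := by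
  ext i j
  cases i using Fin.cases <;> cases j using Fin.cases <;>
    simp [consBlock, Matrix.mul_apply, Fin.sum_univ_succ, Matrix.mulVec, dotProduct, mul_comm]

lemma det_consBlock (a : R) (b : Fin n → R) (M : Matrix (Fin n) (Fin n) R) :
    (consBlock a b M).det = a * M.det := by
  have hminor : (consBlock a b M).submatrix Fin.succ Fin.succ = M := rfl
  have hrow : consBlock a b M 0 = Fin.cons a 0 := rfl
  rw [Matrix.det_succ_row_zero, Fin.sum_univ_succ]
  simp [hminor, hrow]

lemma charpoly_consBlock (a : R) (b : Fin n → R) (M : Matrix (Fin n) (Fin n) R) :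
    (consBlock a b M).charpoly = (Polynomial.X - Polynomial.C a) * M.charpoly := by
  suffices (consBlock a b M).charmatrix =
      consBlock (Polynomial.X - Polynomial.C a) (fun i => -Polynomial.C (b i)) M.charmatrix by
    rw [Matrix.charpoly, this, det_consBlock, Matrix.charpoly]
  ext1 i j
  cases i using Fin.cases <;> cases j using Fin.cases <;>
    simp [consBlock, Matrix.charmatrix_apply, Matrix.diagonal_apply, Fin.succ_ne_zero, eq_comm]

end ConsBlock

lemma exists_mul_eq_consBlock_mul {n : ℕ} {A : Matrix (Fin (n + 1)) (Fin (n + 1)) K} {μ : K}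
    (hμ : A.charpoly.IsRoot μ) :
    ∃ (Q : Matrix (Fin (n + 1)) (Fin (n + 1)) K) (b : Fin n → K) (M : Matrix (Fin n) (Fin n) K),
      IsUnit Q.det ∧ Q * A = consBlock μ b M * Q := by
  obtain ⟨v, hv, hvA⟩ := exists_left_eigenvector hμ
  obtain ⟨Q, hQ, rfl⟩ := exists_isUnit_det_row_eq hv 0
  have hrow : (Q * A * Q⁻¹) 0 = Pi.single 0 μ := by
    calc (Q * A * Q⁻¹) 0 = Q 0 ᵥ* A ᵥ* Q⁻¹ := by
          rw [Matrix.mul_apply_eq_vecMul, Matrix.mul_apply_eq_vecMul]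
      _ = μ • (Q * Q⁻¹) 0 := by rw [hvA, Matrix.smul_vecMul, Matrix.mul_apply_eq_vecMul]
      _ = Pi.single 0 μ := by
          ext j
          simp [Matrix.mul_nonsing_inv Q hQ, Matrix.one_apply, Pi.single_apply, eq_comm]
  obtain ⟨b, M, hbM⟩ := exists_eq_consBlock_of_row_zero_eq_single hrow
  refine ⟨Q, b, M, hQ, ?_⟩
  rw [← hbM, mul_assoc, Matrix.nonsing_inv_mul Q hQ, mul_one]

theorem exists_mul_eq_lowerTriangular_mul {n : ℕ} {A : Matrix (Fin n) (Fin n) K} {d : Fin n → K}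
    (hA : A.charpoly = ∏ i, (Polynomial.X - Polynomial.C (d i))) :
    ∃ L T : Matrix (Fin n) (Fin n) K, IsUnit L.det ∧ L * A = T * L ∧
      T.BlockTriangular OrderDual.toDual ∧ ∀ i, T i i = d i := by
  induction n with
  | zero => exact ⟨1, 0, by simp, Subsingleton.elim _ _, fun i => i.elim0, fun i => i.elim0⟩
  | succ n ih =>
    rw [Fin.prod_univ_succ] at hA
    obtain ⟨Q, b, M, hQ, hQA⟩ := exists_mul_eq_consBlock_mul (A := A) (μ := d 0) (by simp [hA])
    have hM : M.charpoly = ∏ i : Fin n, (Polynomial.X - Polynomial.C (d i.succ)) := by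
      have hconj : (consBlock (d 0) b M).charpoly = A.charpoly := by
        rw [← mul_one (consBlock _ _ _), ← Matrix.mul_nonsing_inv Q hQ, ← mul_assoc, ← hQA,
          Matrix.charpoly_mul_comm, ← mul_assoc, Matrix.nonsing_inv_mul Q hQ, one_mul]
      exact mul_left_cancel₀ (Polynomial.X_sub_C_ne_zero (d 0)) <| by
        rw [← charpoly_consBlock, hconj, hA]
    obtain ⟨L, T, hL, hLM, hT, hTd⟩ := ih hM
    refine ⟨consBlock 1 0 L * Q, consBlock (d 0) (L *ᵥ b) T, ?_, ?_, ?_, ?_⟩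
    · rw [Matrix.det_mul, det_consBlock, one_mul]
      exact hL.mul hQ
    · rw [mul_assoc, hQA, ← mul_assoc, ← mul_assoc, consBlock_mul_consBlock,
        consBlock_mul_consBlock, hLM]
      simp
    · intro i j hij
      cases j using Fin.cases with
      | zero => exact absurd (OrderDual.toDual_lt_toDual.1 hij) (Fin.not_lt_zero i)
      | succ j =>
        cases i using Fin.cases with
        | zero => rfl
        | succ i => exact hT (Fin.succ_lt_succ_iff.1 hij)
    · exact Fin.cases rfl hTd

lemma exists_charpoly_eq_prod [IsAlgClosed K] {n : ℕ} (A : Matrix (Fin n) (Fin n) K) :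
    ∃ d : Fin n → K, A.charpoly = ∏ i, (Polynomial.X - Polynomial.C (d i)) ∧
      A.trace = ∑ i, d i := by
  obtain ⟨d, hd⟩ : ∃ d : Fin n → K, A.charpoly.roots = Finset.univ.val.map d := by
    have hlen : A.charpoly.roots.toList.length = n := by
      rw [Multiset.length_toList, ← (IsAlgClosed.splits _).natDegree_eq_card_roots,
        Matrix.charpoly_natDegree_eq_dim, Fintype.card_fin]
    refine ⟨fun i => A.charpoly.roots.toList.get (i.cast hlen.symm), ?_⟩
    rw [Fin.univ_val_map, ← List.ofFn_congr hlen, List.ofFn_get, Multiset.coe_toList]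
  refine ⟨d, ?_, ?_⟩
  · rw [(IsAlgClosed.splits _).eq_prod_roots_of_monic A.charpoly_monic, hd, Multiset.map_map]
    rfl
  · rw [Matrix.trace_eq_sum_roots_charpoly, hd]
    rfl

end Triangularization

section LinearFactors

open scoped Matrix

variable {K : Type*} [Field K]

lemma X_dvd_of_coeff_eq_zero {σ R : Type*} [CommSemiring R] {i : σ} {f : MvPolynomial σ R}
    (h : ∀ m : σ →₀ ℕ, m i = 0 → coeff m f = 0) : X i ∣ f := by
  rw [X_dvd_iff_modMonomial_eq_zero]
  ext m
  by_cases hm : Finsupp.single i 1 ≤ m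
  · rw [coeff_modMonomial_of_le _ hm, coeff_zero]
  · rw [coeff_modMonomial_of_not_le _ hm, coeff_zero]
    exact h m (by simpa [Finsupp.single_le_iff] using hm)

lemma not_irreducible_of_X_dvd {σ : Type*} {i : σ} {f : MvPolynomial σ K} {n : ℕ}
    (hf : f.IsHomogeneous n) (hn : n ≠ 1) (h : X i ∣ f) : ¬ Irreducible f := by
  obtain ⟨g, rfl⟩ := h
  intro hirr
  have hX : ¬ IsUnit (X i : MvPolynomial σ K) := by
    simp [isUnit_iff_totalDegree_of_isReduced]
  have hg : IsUnit g := (hirr.isUnit_or_isUnit rfl).resolve_left hX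
  have hdeg := hf.totalDegree hirr.ne_zero
  rw [totalDegree_mul_of_isDomain (X_ne_zero i) hg.ne_zero, totalDegree_X,
    (isUnit_iff_totalDegree_of_isReduced.1 hg).2] at hdeg
  exact hn hdeg.symm

lemma exists_eq_mul_natDegree_le [IsAlgClosed K] {p : Polynomial K} {n : ℕ}
    (hp : p.natDegree ≤ n + 1) :
    ∃ a b : Polynomial K, a.natDegree ≤ 1 ∧ b.natDegree ≤ n ∧ p = a * b := by
  rcases hp.lt_or_eq with hlt | heq
  · exact ⟨1, p, by simp, Nat.lt_succ_iff.1 hlt, (one_mul p).symm⟩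
  · obtain ⟨s, hs⟩ := IsAlgClosed.exists_root p fun h0 =>
      n.succ_ne_zero (heq.symm.trans (Polynomial.natDegree_eq_zero_iff_degree_le_zero.2 h0.le))
    obtain ⟨q, rfl⟩ := Polynomial.dvd_iff_isRoot.2 hs
    refine ⟨_, q, (Polynomial.natDegree_X_sub_C s).le, ?_, rfl⟩
    rw [Polynomial.natDegree_mul (Polynomial.X_sub_C_ne_zero s)
      (by rintro rfl; simp at heq), Polynomial.natDegree_X_sub_C] at heq
    omega

lemma exists_linear_mul_of_isHomogeneous_fin_two [IsAlgClosed K] {f : MvPolynomial (Fin 2) K}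
    {n : ℕ} (hf : f.IsHomogeneous (n + 1)) :
    ∃ l q : MvPolynomial (Fin 2) K, l.IsHomogeneous 1 ∧ q.IsHomogeneous n ∧ f = l * q := by
  have hdeg : (aeval ![Polynomial.X, 1] f : Polynomial K).natDegree ≤ n + 1 := by
    have := aeval_natDegree_le f hf.totalDegree_le ![(Polynomial.X : Polynomial K), 1] (n := 1)
      fun i => by fin_cases i <;> simp
    rwa [mul_one] at this
  obtain ⟨a, b, ha, hb, hab⟩ := exists_eq_mul_natDegree_le hdeg
  refine ⟨a.homogenize 1, b.homogenize n, a.isHomogeneous_homogenize,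
    b.isHomogeneous_homogenize, ?_⟩
  rw [← Polynomial.homogenize_mul a b ha hb, ← hab, add_comm,
    Polynomial.homogenize_eq_of_isHomogeneous hf rfl]

lemma exists_rename_succ_eq_of_pderiv_zero_eq_zero [CharZero K] {n : ℕ}
    {f : MvPolynomial (Fin (n + 1)) K} (h : pderiv 0 f = 0) :
    ∃ g : MvPolynomial (Fin n) K, rename Fin.succ g = f := by
  refine exists_rename_eq_of_vars_subset_range f Fin.succ (Fin.succ_injective n) fun i hi => ?_
  rw [Fin.range_succ, Set.mem_compl_singleton_iff]
  rintro rfl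
  obtain ⟨m, hm, h0⟩ := (mem_vars_iff_mem_support 0).1 hi
  have hm0 : m 0 ≠ 0 := Finsupp.mem_support_iff.1 h0
  have hle : Finsupp.single 0 1 ≤ m := Finsupp.single_le_iff.2 (Nat.one_le_iff_ne_zero.2 hm0)
  have hcoeff := congrArg (coeff (m - Finsupp.single 0 1)) h
  rw [coeff_pderiv, tsub_add_cancel_of_le hle, coeff_zero] at hcoeff
  refine (mul_ne_zero (mem_support_iff.1 hm) ?_) hcoeff
  exact Nat.cast_add_one_ne_zero _

lemma not_irreducible_of_pderiv_zero_eq_zero [IsAlgClosed K] [CharZero K]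
    {f : MvPolynomial (Fin 3) K} {n : ℕ} (hf : f.IsHomogeneous (n + 2)) (h : pderiv 0 f = 0) :
    ¬ Irreducible f := by
  obtain ⟨g, rfl⟩ := exists_rename_succ_eq_of_pderiv_zero_eq_zero h
  rw [IsHomogeneous.rename_isHomogeneous_iff (Fin.succ_injective 2)] at hf
  obtain ⟨l, q, hl, hq, rfl⟩ := exists_linear_mul_of_isHomogeneous_fin_two hf
  rw [map_mul]
  exact not_irreducible_mul_of_isHomogeneous hl.rename_isHomogeneous hq.rename_isHomogeneous
    one_ne_zero n.succ_ne_zero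

theorem not_irreducible_of_linearVectorField_vecMulVec_eq_zero [IsAlgClosed K] [CharZero K]
    {f : MvPolynomial (Fin 3) K} {n : ℕ} (hf : f.IsHomogeneous (n + 2)) {u c : Fin 3 → K}
    (hu : u ≠ 0) (hc : c ≠ 0) (h : linearVectorField (Matrix.vecMulVec u c) f = 0) :
    ¬ Irreducible f := by
  -- in coordinates where `u` is the first basis vector, `f` does not involve `x₀`
  obtain ⟨Q, hQ, rfl⟩ := exists_isUnit_det_row_eq hu 0
  have hP : IsUnit Qᵀ.det := by rwa [Matrix.det_transpose]
  have hconj : Matrix.vecMulVec (Q 0) c * Qᵀ =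
      Qᵀ * Matrix.vecMulVec (Pi.single 0 1) (c ᵥ* Qᵀ) := by
    rw [Matrix.vecMulVec_mul, Matrix.mul_vecMulVec, Matrix.mulVec_single_one]
    rfl
  have hprod := linearVectorField_linearSubst hconj f
  rw [h, map_zero, linearVectorField_vecMulVec, mul_eq_zero] at hprod
  rw [← irreducible_linearSubst_iff hP]
  refine not_irreducible_of_pderiv_zero_eq_zero (linearSubst_isHomogeneous hf _) ?_
  have hpderiv := hprod.resolve_left ?_
  · simpa [Pi.single_apply] using hpderiv
  · intro h0
    refine hc (Matrix.vecMul_injective_of_isUnit ((Matrix.isUnit_iff_isUnit_det _).2 hP) ?_)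
    ext j
    simpa [coeff_sum, coeff_C_mul, coeff_X, Finsupp.single_left_inj] using
      congrArg (coeff (Finsupp.single j 1)) h0

end LinearFactors

section TriangularSymmetry

lemma coeff_X_mul_pderiv_self {σ R : Type*} [CommSemiring R] (i : σ) (f : MvPolynomial σ R)
    (m : σ →₀ ℕ) : coeff m (X i * pderiv i f) = m i * coeff m f := by
  classical
  rw [coeff_X_mul', coeff_pderiv]
  split_ifs with h
  · have hi : m i ≠ 0 := Finsupp.mem_support_iff.1 h
    rw [tsub_add_cancel_of_le (Finsupp.single_le_iff.2 (Nat.one_le_iff_ne_zero.2 hi)), mul_comm]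
    have hsub : (m - Finsupp.single i 1 : σ →₀ ℕ) i + 1 = m i := by
      rw [Finsupp.tsub_apply, Finsupp.single_eq_same]
      omega
    rw [← hsub, Nat.cast_add_one]
  · rw [Finsupp.notMem_support_iff.1 h, Nat.cast_zero, zero_mul]

lemma coeff_X_mul_pderiv_of_ne {σ R : Type*} [CommSemiring R] {i j : σ} (hij : i ≠ j)
    (f : MvPolynomial σ R) (m : σ →₀ ℕ) :
    coeff m (X j * pderiv i f) = if m j = 0 then 0 else
      (m i + 1) * coeff (m - Finsupp.single j 1 + Finsupp.single i 1) f := by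
  classical
  simp [coeff_X_mul', coeff_pderiv, Finsupp.single_eq_of_ne hij, mul_comm]

variable {R : Type*} [CommRing R]

/-- The coefficient of `x₀ᵃ x₁ᵇ x₂ᶜ` in a polynomial in three variables. -/
noncomputable def ternaryCoeff (f : MvPolynomial (Fin 3) R) (a b c : ℕ) : R :=
  coeff (Finsupp.equivFunOnFinite.symm ![a, b, c]) f

lemma ternaryCoeff_zero (a b c : ℕ) : ternaryCoeff (0 : MvPolynomial (Fin 3) R) a b c = 0 :=
  coeff_zero _

lemma ternaryCoeff_linearVectorField {T : Matrix (Fin 3) (Fin 3) R}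
    (hT : T.BlockTriangular OrderDual.toDual) (f : MvPolynomial (Fin 3) R) (a b c : ℕ) :
    ternaryCoeff (linearVectorField T f) a b c =
      (a * T 0 0 + b * T 1 1 + c * T 2 2) * ternaryCoeff f a b c +
      (if a = 0 then 0 else T 1 0 * ((b + 1) * ternaryCoeff f (a - 1) (b + 1) c) +
        T 2 0 * ((c + 1) * ternaryCoeff f (a - 1) b (c + 1))) +
      (if b = 0 then 0 else T 2 1 * ((c + 1) * ternaryCoeff f a (b - 1) (c + 1))) := by
  have h01 : T 0 1 = 0 := hT (by decide)
  have h02 : T 0 2 = 0 := hT (by decide)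
  have h12 : T 1 2 = 0 := hT (by decide)
  simp only [ternaryCoeff]
  set m : Fin 3 →₀ ℕ := Finsupp.equivFunOnFinite.symm ![a, b, c]
  have hm0 : m 0 = a := rfl
  have hm1 : m 1 = b := rfl
  have hm2 : m 2 = c := rfl
  have h10 : m - Finsupp.single 0 1 + Finsupp.single 1 1 =
      Finsupp.equivFunOnFinite.symm ![a - 1, b + 1, c] := by
    ext i
    fin_cases i <;> simp [hm0, hm1, hm2]
  have h20 : m - Finsupp.single 0 1 + Finsupp.single 2 1 =
      Finsupp.equivFunOnFinite.symm ![a - 1, b, c + 1] := by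
    ext i
    fin_cases i <;> simp [hm0, hm1, hm2]
  have h21 : m - Finsupp.single 1 1 + Finsupp.single 2 1 =
      Finsupp.equivFunOnFinite.symm ![a, b - 1, c + 1] := by
    ext i
    fin_cases i <;> simp [hm0, hm1, hm2]
  rw [coeff_linearVectorField]
  simp only [Fin.sum_univ_three, h01, h02, h12, coeff_X_mul_pderiv_self, ne_eq, Fin.reduceEq,
    not_false_eq_true, coeff_X_mul_pderiv_of_ne, h10, h20, h21, hm0, hm1, hm2, zero_mul]
  split_ifs <;> ring

variable {K : Type*} [Field K]

lemma not_irreducible_of_ternaryCoeff_eq_zero {f : MvPolynomial (Fin 3) K}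
    (hf : f.IsHomogeneous 3) (h003 : ternaryCoeff f 0 0 3 = 0) (h012 : ternaryCoeff f 0 1 2 = 0)
    (h021 : ternaryCoeff f 0 2 1 = 0) (h030 : ternaryCoeff f 0 3 0 = 0) : ¬ Irreducible f := by
  refine not_irreducible_of_X_dvd hf (by decide) (X_dvd_of_coeff_eq_zero (i := 0) fun m hm => ?_)
  by_contra hne
  have hdeg : m 0 + m 1 + m 2 = 3 := by
    rw [← Fin.sum_univ_three, ← Finsupp.degree_eq_sum]
    by_contra hd
    exact hne (hf.coeff_eq_zero hd)
  have hm3 : m = Finsupp.equivFunOnFinite.symm ![0, m 1, 3 - m 1] := by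
    ext i
    fin_cases i
    · exact hm
    · rfl
    · change m 2 = 3 - m 1
      omega
  have hle : m 1 ≤ 3 := by omega
  rw [hm3] at hne
  interval_cases m 1
  exacts [hne h003, hne h012, hne h021, hne h030]

variable [CharZero K]

lemma not_irreducible_of_lowerTriangular_of_diag_ne {f : MvPolynomial (Fin 3) K}
    (hf : f.IsHomogeneous 3) {T : Matrix (Fin 3) (Fin 3) K}
    (hT : T.BlockTriangular OrderDual.toDual) (htr : T.trace = 0) (h1 : T 1 1 ≠ 0) (h2 : T 2 2 ≠ 0)
    (h10 : T 1 1 ≠ T 0 0) (h20 : T 2 2 ≠ T 0 0) (h : linearVectorField T f = 0) :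
    ¬ Irreducible f := by
  have hcoeff := ternaryCoeff_linearVectorField hT f
  simp only [h, ternaryCoeff_zero] at hcoeff
  rw [Matrix.trace_fin_three] at htr
  have h003 : ternaryCoeff f 0 0 3 = 0 := by
    simpa [h2] using hcoeff 0 0 3
  have h012 : ternaryCoeff f 0 1 2 = 0 := by
    have hweight : T 1 1 + 2 * T 2 2 ≠ 0 := fun h0 => h20 (by linear_combination h0 - htr)
    simpa [h003, hweight] using hcoeff 0 1 2
  have h021 : ternaryCoeff f 0 2 1 = 0 := by
    have hweight : 2 * T 1 1 + T 2 2 ≠ 0 := fun h0 => h10 (by linear_combination h0 - htr)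
    simpa [h012, hweight] using hcoeff 0 2 1
  have h030 : ternaryCoeff f 0 3 0 = 0 := by
    simpa [h021, h1] using hcoeff 0 3 0
  exact not_irreducible_of_ternaryCoeff_eq_zero hf h003 h012 h021 h030

lemma not_irreducible_of_strictlyLowerTriangular [IsAlgClosed K] {f : MvPolynomial (Fin 3) K}
    (hf : f.IsHomogeneous 3) {T : Matrix (Fin 3) (Fin 3) K}
    (hT : T.BlockTriangular OrderDual.toDual) (hdiag : ∀ i, T i i = 0) (hT0 : T ≠ 0)
    (h : linearVectorField T f = 0) : ¬ Irreducible f := by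
  have h01 : T 0 1 = 0 := hT (by decide)
  have h02 : T 0 2 = 0 := hT (by decide)
  have h12 : T 1 2 = 0 := hT (by decide)
  by_cases h10 : T 1 0 = 0
  · have hrank : T = Matrix.vecMulVec ![0, 0, 1] (T 2) := by
      ext i j
      fin_cases i <;> fin_cases j <;> simp [Matrix.vecMulVec_apply, *]
    rw [hrank] at h hT0
    exact not_irreducible_of_linearVectorField_vecMulVec_eq_zero hf (fun h0 => hT0 (by simp [h0]))
      (fun h0 => hT0 (by simp [h0])) h
  by_cases h21 : T 2 1 = 0
  · have hrank : T = Matrix.vecMulVec (fun i => T i 0) ![1, 0, 0] := by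
      ext i j
      fin_cases i <;> fin_cases j <;> simp [Matrix.vecMulVec_apply, *]
    rw [hrank] at h hT0
    exact not_irreducible_of_linearVectorField_vecMulVec_eq_zero hf (fun h0 => hT0 (by simp [h0]))
      (fun h0 => hT0 (by simp [h0])) h
  have hcoeff := ternaryCoeff_linearVectorField hT f
  simp only [h, ternaryCoeff_zero, hdiag, mul_zero, add_zero, zero_mul, zero_add] at hcoeff
  have h003 : ternaryCoeff f 0 0 3 = 0 := by
    simpa [h21, (by norm_num : (2 : K) + 1 ≠ 0)] using hcoeff 0 1 2
  have h012 : ternaryCoeff f 0 1 2 = 0 := by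
    simpa [h21, (by norm_num : (1 : K) + 1 ≠ 0)] using hcoeff 0 2 1
  have h021 : ternaryCoeff f 0 2 1 = 0 := by
    simpa [h21] using hcoeff 0 3 0
  have h102 : ternaryCoeff f 1 0 2 = 0 := by
    simpa [h21, h012, h021, (by norm_num : (1 : K) + 1 ≠ 0)] using hcoeff 1 1 1
  have h111 : ternaryCoeff f 1 1 1 = 0 := by
    simpa [h10, h102] using hcoeff 2 0 1
  have h030 : ternaryCoeff f 0 3 0 = 0 := by
    simpa [h10, h021, h111, (by norm_num : (2 : K) + 1 ≠ 0)] using hcoeff 1 2 0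
  exact not_irreducible_of_ternaryCoeff_eq_zero hf h003 h012 h021 h030

lemma exists_perm_ne_of_sum_eq_zero {d : Fin 3 → K} (hd : d ≠ 0) (hsum : ∑ i, d i = 0) :
    ∃ e : Equiv.Perm (Fin 3), d (e 1) ≠ 0 ∧ d (e 2) ≠ 0 ∧ d (e 1) ≠ d (e 0) ∧
      d (e 2) ≠ d (e 0) := by
  have hd' : d 0 ≠ 0 ∨ d 1 ≠ 0 ∨ d 2 ≠ 0 := by
    by_contra! h0
    exact hd (funext fun i => by fin_cases i <;> simp [h0])
  rw [Fin.sum_univ_three] at hsum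
  -- `e 0` is the index of the entry `0` if there is one, and else of an entry that occurs once
  suffices (d 1 ≠ 0 ∧ d 2 ≠ 0 ∧ d 1 ≠ d 0 ∧ d 2 ≠ d 0) ∨
      (d 0 ≠ 0 ∧ d 2 ≠ 0 ∧ d 0 ≠ d 1 ∧ d 2 ≠ d 1) ∨
      (d 1 ≠ 0 ∧ d 0 ≠ 0 ∧ d 1 ≠ d 2 ∧ d 0 ≠ d 2) by
    rcases this with h | h | h
    exacts [⟨1, h⟩, ⟨Equiv.swap 0 1, h⟩, ⟨Equiv.swap 0 2, h⟩]
  grind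

theorem not_irreducible_of_hasInfinitesimalSymmetry [IsAlgClosed K] {f : MvPolynomial (Fin 3) K}
    (hf : f.IsHomogeneous 3) (h : HasInfinitesimalSymmetry f) : ¬ Irreducible f := by
  obtain ⟨A, hA, htr, hAf⟩ := h
  obtain ⟨d, hchar, htrd⟩ := exists_charpoly_eq_prod A
  have hsum : ∑ i, d i = 0 := htrd.symm.trans htr
  have triangularize (e : Equiv.Perm (Fin 3)) : ∃ P T : Matrix (Fin 3) (Fin 3) K,
      IsUnit P.det ∧ T ≠ 0 ∧ T.BlockTriangular OrderDual.toDual ∧ (∀ i, T i i = d (e i)) ∧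
        linearVectorField T (linearSubst P f) = 0 := by
    rw [← Equiv.prod_comp e] at hchar
    obtain ⟨L, T, hL, hLA, hT, hdiag⟩ := exists_mul_eq_lowerTriangular_mul hchar
    have hAT : A * L⁻¹ = L⁻¹ * T := by
      rw [← Matrix.nonsing_inv_mul_cancel_left _ (A * L⁻¹) hL, ← mul_assoc L, hLA, mul_assoc T,
        Matrix.mul_nonsing_inv L hL, mul_one]
    refine ⟨L⁻¹, T, Matrix.isUnit_nonsing_inv_det L hL, ?_, hT, hdiag, ?_⟩
    · rintro rfl
      rw [zero_mul] at hLA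
      exact hA (by rw [← Matrix.nonsing_inv_mul_cancel_left L A hL, hLA, mul_zero])
    · rw [linearVectorField_linearSubst hAT, hAf, map_zero]
  by_cases hd : d = 0
  · obtain ⟨P, T, hP, hT0, hT, hdiag, hTf⟩ := triangularize 1
    rw [← irreducible_linearSubst_iff hP]
    exact not_irreducible_of_strictlyLowerTriangular (linearSubst_isHomogeneous hf P) hT
      (fun i => by rw [hdiag, hd, Pi.zero_apply]) hT0 hTf
  · obtain ⟨e, h1, h2, h10, h20⟩ := exists_perm_ne_of_sum_eq_zero hd hsum
    obtain ⟨P, T, hP, -, hT, hdiag, hTf⟩ := triangularize e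
    rw [← irreducible_linearSubst_iff hP]
    rw [← hdiag, ← hdiag] at h10 h20
    rw [← hdiag] at h1 h2
    refine not_irreducible_of_lowerTriangular_of_diag_ne (linearSubst_isHomogeneous hf P) hT ?_
      h1 h2 h10 h20 hTf
    rw [Matrix.trace, ← hsum, ← Equiv.sum_comp e d]
    exact Finset.sum_congr rfl fun i _ => hdiag i

end TriangularSymmetry

/-- A nonzero cubic form has infinite `SL₃(ℂ)`-stabilizer iff it is reducible. -/
theorem stabilizer_infinite_iff_reducible (f : MvPolynomial (Fin 3) ℂ) (hf : f ≠ 0)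
    (hdeg : f.IsHomogeneous 3) :
    {g : Matrix.SpecialLinearGroup (Fin 3) ℂ | substSL g f = f}.Infinite ↔
      ¬ Irreducible f := by
  constructor
  · intro hinf
    have hsymm : HasInfinitesimalSymmetry f := by
      by_contra hnot
      exact hinf (finite_stabilizer_of_not_hasInfinitesimalSymmetry hnot)
    exact not_irreducible_of_hasInfinitesimalSymmetry hdeg hsymm
  · intro hred
    exact infinite_stabilizer_of_hasInfinitesimalSymmetry
      (hasInfinitesimalSymmetry_of_not_irreducible hf hdeg hred)
end

section
/- Let (α,β) ∈ ℂ² with (α,β) ≠ (0,0) and let f = α·(x₀³+x₁³+x₂³) + β·x₀x₁x₂. Then f is a smooth cubic form (i.e., C(f) is an elliptic curve) if and only if α ≠ 0 and β³ ≠ −27·α³ (equivalently, β/α ∉ {−3, −3ε, −3ε²}). -/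
open MvPolynomial

/-- A cubic form is smooth iff at every nonzero zero of `f` the gradient of `f` does not
vanish; equivalently, the plane cubic `C(f) ⊂ ℙ²(ℂ)` is an elliptic curve. -/
def IsSmoothCubic (f : MvPolynomial (Fin 3) ℂ) : Prop :=
  ∀ v : Fin 3 → ℂ, v ≠ 0 → eval v f = 0 → ∃ i : Fin 3, eval v (pderiv i f) ≠ 0

/-! At a singular zero `(x, y, z)` of `α(x³ + y³ + z³) + βxyz` the partial derivatives give
`3αx² = -βyz` and its two cyclic analogues. Multiplying the three relations shows
`(β³ + 27α³)(xyz)² = 0`, so a singular zero of a member with `β³ ≠ -27α³` has a vanishing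
coordinate; feeding this back into the relations makes all pairwise products of coordinates vanish,
and then `α(x³ + y³ + z³) = 0` forces the point to be `0`. Conversely, `(1, 0, 0)` is singular when
`α = 0`, and `(-3α, β, β)` is singular when `β³ = -27α³`. The latter point degenerates for `β = 0`,
which is possible with `α ≠ 0` only in characteristic `3`; there `(1, -1, 0)` replaces it. -/

/-- A point of the affine cone over the hypersurface `f = 0` at which the gradient of `f` vanishes.
The vertex `0` is not excluded, so smoothness of a form says that `0` is its only singular zero. -/
def IsSingularZero {σ R : Type*} [CommSemiring R] (f : MvPolynomial σ R) (v : σ → R) : Prop :=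
  eval v f = 0 ∧ ∀ i, eval v (pderiv i f) = 0

theorem isSmoothCubic_iff (f : MvPolynomial (Fin 3) ℂ) :
    IsSmoothCubic f ↔ ∀ v, IsSingularZero f v → v = 0 := by
  refine forall_congr' fun v => ?_
  rw [IsSingularZero, ← not_imp_not (a := v = 0), not_and, not_forall]

/-- The member of the Hesse pencil, spanned by the Fermat cubic and the coordinate triangle, with
coefficients `α` and `β`, over any coefficient ring. -/
noncomputable def hesseCubic {R : Type*} [CommSemiring R] (α β : R) : MvPolynomial (Fin 3) R :=
  C α * ((X 0) ^ 3 + (X 1) ^ 3 + (X 2) ^ 3) + C β * (X 0 * X 1 * X 2)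

section CommSemiring

variable {R : Type*} [CommSemiring R]

theorem eval_hesseCubic (α β : R) (v : Fin 3 → R) :
    eval v (hesseCubic α β) =
      α * (v 0 ^ 3 + v 1 ^ 3 + v 2 ^ 3) + β * (v 0 * v 1 * v 2) := by
  simp [hesseCubic]

theorem pderiv_hesseCubic (α β : R) (i : Fin 3) :
    pderiv i (hesseCubic α β) = 3 * C α * X i ^ 2 + C β * (X (i + 1) * X (i + 2)) := by
  fin_cases i <;> simp [hesseCubic, pderiv_X, Derivation.leibniz, Derivation.leibniz_pow] <;> ring

theorem isSingularZero_hesseCubic_iff {α β : R} {v : Fin 3 → R} :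
    IsSingularZero (hesseCubic α β) v ↔
      α * (v 0 ^ 3 + v 1 ^ 3 + v 2 ^ 3) + β * (v 0 * v 1 * v 2) = 0 ∧
        3 * α * v 0 ^ 2 + β * (v 1 * v 2) = 0 ∧
        3 * α * v 1 ^ 2 + β * (v 2 * v 0) = 0 ∧
        3 * α * v 2 ^ 2 + β * (v 0 * v 1) = 0 := by
  simp [IsSingularZero, eval_hesseCubic, pderiv_hesseCubic, Fin.forall_fin_succ]

theorem isSingularZero_hesseCubic_zero_left (β : R) :
    IsSingularZero (hesseCubic 0 β) ![1, 0, 0] := by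
  simp [isSingularZero_hesseCubic_iff]

end CommSemiring

section CommRing

variable {R : Type*} [CommRing R] {α β x y z : R}

theorem isSingularZero_hesseCubic_of_pow_three_eq (h : β ^ 3 = -27 * α ^ 3) :
    IsSingularZero (hesseCubic α β) ![-3 * α, β, β] := by
  simp only [isSingularZero_hesseCubic_iff, Matrix.cons_val]
  refine ⟨?_, ?_, ?_, ?_⟩
  · linear_combination (-α) * h
  · linear_combination h
  · ring
  · ring

theorem isSingularZero_hesseCubic_zero_right (h : 3 * α = 0) :
    IsSingularZero (hesseCubic α 0) ![1, -1, 0] := by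
  simp only [isSingularZero_hesseCubic_iff, Matrix.cons_val]
  refine ⟨?_, ?_, ?_, ?_⟩
  · ring
  · linear_combination h
  · linear_combination h
  · ring

theorem mul_prod_sq_eq_zero_of_hesse_gradient (hx : 3 * α * x ^ 2 + β * (y * z) = 0)
    (hy : 3 * α * y ^ 2 + β * (z * x) = 0) (hz : 3 * α * z ^ 2 + β * (x * y) = 0) :
    (β ^ 3 + 27 * α ^ 3) * (x * y * z) ^ 2 = 0 := by
  have key : 27 * α ^ 3 * (x * y * z) ^ 2 = -β ^ 3 * (x * y * z) ^ 2 :=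
    calc 27 * α ^ 3 * (x * y * z) ^ 2
        = (3 * α * x ^ 2) * (3 * α * y ^ 2) * (3 * α * z ^ 2) := by ring
      _ = -(β * (y * z)) * -(β * (z * x)) * -(β * (x * y)) := by
        rw [eq_neg_of_add_eq_zero_left hx, eq_neg_of_add_eq_zero_left hy,
          eq_neg_of_add_eq_zero_left hz]
      _ = -β ^ 3 * (x * y * z) ^ 2 := by ring
  linear_combination key

theorem mul_pair_sq_eq_zero_of_hesse_gradient (hx : 3 * α * x ^ 2 + β * (y * z) = 0)
    (hy : 3 * α * y ^ 2 + β * (z * x) = 0) (hz : 3 * α * z ^ 2 + β * (x * y) = 0)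
    (hxyz : x * y * z = 0) :
    (β ^ 3 + 27 * α ^ 3) * (y * z) ^ 2 = 0 := by
  have hβ : β * (y * z) ^ 2 = 0 := by linear_combination y * z * hx - 3 * α * x * hxyz
  have hα : 9 * α ^ 2 * (y * z) ^ 2 = 0 := by
    linear_combination 3 * α * z ^ 2 * hy - β * z * x * hz + β ^ 2 * x * hxyz
  linear_combination β ^ 2 * hβ + 3 * α * hα

theorem pairwise_mul_eq_zero_of_hesse_gradient [NoZeroDivisors R] (hαβ : β ^ 3 ≠ -27 * α ^ 3)
    (hx : 3 * α * x ^ 2 + β * (y * z) = 0) (hy : 3 * α * y ^ 2 + β * (z * x) = 0)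
    (hz : 3 * α * z ^ 2 + β * (x * y) = 0) :
    y * z = 0 ∧ z * x = 0 ∧ x * y = 0 := by
  have hne : β ^ 3 + 27 * α ^ 3 ≠ 0 := fun h => hαβ (by linear_combination h)
  have eq_zero_of_mul_sq {t : R} (ht : (β ^ 3 + 27 * α ^ 3) * t ^ 2 = 0) : t = 0 :=
    pow_eq_zero_iff two_ne_zero |>.mp ((mul_eq_zero_iff_left hne).mp ht)
  have hxyz : x * y * z = 0 :=
    eq_zero_of_mul_sq (mul_prod_sq_eq_zero_of_hesse_gradient hx hy hz)
  have hyzx : y * z * x = 0 := by linear_combination hxyz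
  have hzxy : z * x * y = 0 := by linear_combination hxyz
  exact ⟨eq_zero_of_mul_sq (mul_pair_sq_eq_zero_of_hesse_gradient hx hy hz hxyz),
    eq_zero_of_mul_sq (mul_pair_sq_eq_zero_of_hesse_gradient hy hz hx hyzx),
    eq_zero_of_mul_sq (mul_pair_sq_eq_zero_of_hesse_gradient hz hx hy hzxy)⟩

theorem IsSingularZero.eq_zero_of_hesseCubic [NoZeroDivisors R] (hα : α ≠ 0)
    (hαβ : β ^ 3 ≠ -27 * α ^ 3) {v : Fin 3 → R} (hv : IsSingularZero (hesseCubic α β) v) :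
    v = 0 := by
  obtain ⟨hf, h0, h1, h2⟩ := isSingularZero_hesseCubic_iff.mp hv
  obtain ⟨h12, h20, h01⟩ := pairwise_mul_eq_zero_of_hesse_gradient hαβ h0 h1 h2
  have hcubes : v 0 ^ 3 + v 1 ^ 3 + v 2 ^ 3 = 0 :=
    (mul_eq_zero_iff_left hα).mp (by linear_combination hf - β * v 2 * h01)
  have hpow : ∀ i, v i ^ 4 = 0
    | 0 => by linear_combination v 0 * hcubes - v 1 ^ 2 * h01 - v 2 ^ 2 * h20
    | 1 => by linear_combination v 1 * hcubes - v 0 ^ 2 * h01 - v 2 ^ 2 * h12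
    | 2 => by linear_combination v 2 * hcubes - v 0 ^ 2 * h20 - v 1 ^ 2 * h12
  exact funext fun i => pow_eq_zero_iff four_ne_zero |>.mp (hpow i)

theorem exists_isSingularZero_hesseCubic [IsDomain R] (h : β ^ 3 = -27 * α ^ 3) :
    ∃ v, v ≠ 0 ∧ IsSingularZero (hesseCubic α β) v := by
  obtain rfl | hβ := eq_or_ne β 0
  · have hα : 3 * α = 0 := pow_eq_zero_iff three_ne_zero |>.mp (by linear_combination h)
    exact ⟨![1, -1, 0], by simp, isSingularZero_hesseCubic_zero_right hα⟩
  · exact ⟨![-3 * α, β, β], by simp [hβ], isSingularZero_hesseCubic_of_pow_three_eq h⟩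

theorem hesse_member_smooth_iff_general [IsDomain R] (α β : R) :
    (∀ v, IsSingularZero (hesseCubic α β) v → v = 0) ↔ α ≠ 0 ∧ β ^ 3 ≠ -27 * α ^ 3 := by
  refine ⟨fun hsmooth => ⟨?_, fun h => ?_⟩, fun ⟨hα, hαβ⟩ v hv => hv.eq_zero_of_hesseCubic hα hαβ⟩
  · rintro rfl
    simpa using hsmooth _ (isSingularZero_hesseCubic_zero_left β)
  · obtain ⟨v, hv, hsing⟩ := exists_isSingularZero_hesseCubic h
    exact hv (hsmooth v hsing)

end CommRing

/-- The member `α(x₀³+x₁³+x₂³) + β·x₀x₁x₂` of the Hesse pencil is a smooth cubic (i.e. an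
elliptic curve) iff `α ≠ 0` and `β³ ≠ −27·α³`. -/
theorem hesse_member_smooth_iff (α β : ℂ) (hαβ : (α, β) ≠ (0, 0)) :
    IsSmoothCubic
        (C α * ((X 0) ^ 3 + (X 1) ^ 3 + (X 2) ^ 3) + C β * (X 0 * X 1 * X 2)) ↔
      α ≠ 0 ∧ β ^ 3 ≠ -27 * α ^ 3 :=
  (isSmoothCubic_iff _).trans (hesse_member_smooth_iff_general α β)
end
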